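/- arXiv:math/0604211 — 2 statements merged into one kernel-verified Lean document; each statement's English description precedes it below -/
import Mathlib

section
/- Let ℓ : ⟨Π_ℚ⟩ → ℝ be a Wiener-L¹-continuous linear functional and let ℓ̄ : ⟨Π_ℝ⟩ → ℝ be its unique Wiener-L¹-continuous linear extension. If f(b) ∈ ⟨Π_ℚ⟩ is such that ℓ( g(b)² · f(b) ) ≥ 0 for all g(b) ∈ ⟨Π_ℚ⟩, then ℓ̄( g(b)² · f(b) ) ≥ 0 for all g(b) ∈ ⟨Π_ℝ⟩. -/
open MeasureTheory ProbabilityTheory Filter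

/-- A process `b` is a one-dimensional Brownian motion pinned at zero (on the time
interval `[0,1]`) under the measure `W`. -/
def IsBrownianMotion {Ω : Type*} [MeasurableSpace Ω] (W : Measure Ω) (b : ℝ → Ω → ℝ) : Prop :=
  (∀ t : ℝ, Measurable (b t)) ∧
  (∀ ω : Ω, ContinuousOn (fun t => b t ω) (Set.Icc (0:ℝ) 1)) ∧
  (∀ ω : Ω, b 0 ω = 0) ∧
  (∀ s t : ℝ, 0 ≤ s → s ≤ t → t ≤ 1 →
    W.map (fun ω => b t ω - b s ω) = gaussianReal 0 (Real.toNNReal (t - s))) ∧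
  (∀ (n : ℕ) (ts : Fin (n + 1) → ℝ), Monotone ts → (∀ i, ts i ∈ Set.Icc (0:ℝ) 1) →
    iIndepFun
      (fun i : Fin n => fun ω => b (ts i.succ) ω - b (ts i.castSucc) ω) W)

/-- `Π_ℚ`: products `∏_{j=1}^m b_{q_j}^{i_j}` with `q_j ∈ ℚ ∩ (0,1]` and `i_j ≥ 1`. -/
def PiQ {Ω : Type*} (b : ℝ → Ω → ℝ) : Set (Ω → ℝ) :=
  {Y | ∃ (m : ℕ) (i : Fin m → ℕ) (q : Fin m → ℚ),
    (∀ j, 1 ≤ i j) ∧ (∀ j, 0 < q j ∧ q j ≤ 1) ∧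
    Y = fun ω => ∏ j : Fin m, (b ((q j : ℚ) : ℝ) ω) ^ (i j)}

/-- `Π_ℝ`: products `∏_{j=1}^m b_{t_j}^{i_j}` with `t_j ∈ (0,1]` and `i_j ≥ 1`. -/
def PiR {Ω : Type*} (b : ℝ → Ω → ℝ) : Set (Ω → ℝ) :=
  {Y | ∃ (m : ℕ) (i : Fin m → ℕ) (t : Fin m → ℝ),
    (∀ j, 1 ≤ i j) ∧ (∀ j, 0 < t j ∧ t j ≤ 1) ∧
    Y = fun ω => ∏ j : Fin m, (b (t j) ω) ^ (i j)}

/-- A linear functional on a subspace of random variables is Wiener-L¹-continuous iff it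
is bounded with respect to the L¹(W)-(semi)norm. -/
def WienerL1Continuous {Ω : Type*} [MeasurableSpace Ω] (W : Measure Ω)
    {V : Submodule ℝ (Ω → ℝ)} (ℓ : V →ₗ[ℝ] ℝ) : Prop :=
  ∃ C : ℝ, ∀ F : V, |ℓ F| ≤ C * ∫ ω, |(F : Ω → ℝ) ω| ∂W

/-!
`⟨Π_ℚ⟩` and `⟨Π_ℝ⟩` are the algebras generated by the values of Brownian motion at rational and at
real times in `(0,1]`. Applying Hölder's inequality to `L^p`-limits of products requires control in
`L^(2p)`, so that the limits taken in all `L^p`, `p < ∞`, at once again form an algebra. An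
increment of Brownian motion has `L^p`-norm proportional to the square root of its length, hence
each `b_t` is such a limit of values at rational times, and so is every polynomial of Brownian
motion. If polynomials `u_n` at rational times converge to `g` in this sense, then `u_n² f → g² f`
in `L¹`, and the nonnegative numbers `ℓ̄(u_n² f)` converge to `ℓ̄(g² f)`.
-/

open scoped ENNReal NNReal Topology

section Lp

variable {Ω ι : Type*} [MeasurableSpace Ω] {μ : Measure Ω} {p q r : ℝ≥0∞} {l : Filter ι}

theorem holderTriple_two_mul (p : ℝ≥0∞) : ENNReal.HolderTriple (2 * p) (2 * p) p where
  inv_add_inv_eq_inv := by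
    rw [ENNReal.mul_inv (.inl two_ne_zero) (.inl ENNReal.ofNat_ne_top), ← add_mul,
      ENNReal.inv_two_add_inv_two, one_mul]

theorem tendsto_eLpNorm_add_of_tendsto_zero {E : Type*} [NormedAddCommGroup E] {u v : ι → Ω → E}
    (hum : ∀ i, AEStronglyMeasurable (u i) μ) (hvm : ∀ i, AEStronglyMeasurable (v i) μ)
    (hu : Tendsto (fun i => eLpNorm (u i) p μ) l (𝓝 0))
    (hv : Tendsto (fun i => eLpNorm (v i) p μ) l (𝓝 0)) :
    Tendsto (fun i => eLpNorm (u i + v i) p μ) l (𝓝 0) := by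
  have hbound : Tendsto (fun i => p.LpAddConst * (eLpNorm (u i) p μ + eLpNorm (v i) p μ))
      l (𝓝 0) := by
    simpa only [add_zero, mul_zero] using
      ENNReal.Tendsto.const_mul (hu.add hv) (.inr p.LpAddConst_lt_top.ne)
  exact tendsto_of_tendsto_of_tendsto_of_le_of_le tendsto_const_nhds hbound
    (fun _ => zero_le) fun i => eLpNorm_add_le' (hum i) (hvm i) p

variable {R : Type*} [NormedRing R]

theorem tendsto_eLpNorm_mul_of_mul_eq_zero [ENNReal.HolderTriple p q r] {u v : ι → Ω → R}
    {a b : ℝ≥0∞}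
    (hum : ∀ i, AEStronglyMeasurable (u i) μ) (hvm : ∀ i, AEStronglyMeasurable (v i) μ)
    (hu : Tendsto (fun i => eLpNorm (u i) p μ) l (𝓝 a))
    (hv : Tendsto (fun i => eLpNorm (v i) q μ) l (𝓝 b))
    (ha : a ≠ ∞) (hb : b ≠ ∞) (hab : a * b = 0) :
    Tendsto (fun i => eLpNorm (u i * v i) r μ) l (𝓝 0) := by
  have hbound : Tendsto (fun i => eLpNorm (u i) p μ * eLpNorm (v i) q μ) l (𝓝 0) :=
    hab ▸ ENNReal.Tendsto.mul hu (.inr hb) hv (.inr ha)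
  refine tendsto_of_tendsto_of_tendsto_of_le_of_le tendsto_const_nhds hbound
    (fun _ => zero_le) fun i => ?_
  rw [← smul_eq_mul]
  exact eLpNorm_smul_le_mul_eLpNorm (hvm i) (hum i)

theorem tendsto_eLpNorm_mul_sub [ENNReal.HolderTriple p q r]
    {u v : ι → Ω → R} {g h : Ω → R}
    (hum : ∀ i, AEStronglyMeasurable (u i) μ) (hvm : ∀ i, AEStronglyMeasurable (v i) μ)
    (hg : MemLp g p μ) (hh : MemLp h q μ)
    (hu : Tendsto (fun i => eLpNorm (u i - g) p μ) l (𝓝 0))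
    (hv : Tendsto (fun i => eLpNorm (v i - h) q μ) l (𝓝 0)) :
    Tendsto (fun i => eLpNorm (u i * v i - g * h) r μ) l (𝓝 0) := by
  have hum' i : AEStronglyMeasurable (u i - g) μ := (hum i).sub hg.1
  have hvm' i : AEStronglyMeasurable (v i - h) μ := (hvm i).sub hh.1
  have hdiff_diff : Tendsto (fun i => eLpNorm ((u i - g) * (v i - h)) r μ) l (𝓝 0) :=
    tendsto_eLpNorm_mul_of_mul_eq_zero hum' hvm' hu hv
      ENNReal.zero_ne_top ENNReal.zero_ne_top (mul_zero 0)
  have hdiff_h : Tendsto (fun i => eLpNorm ((u i - g) * h) r μ) l (𝓝 0) :=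
    tendsto_eLpNorm_mul_of_mul_eq_zero hum' (fun _ => hh.1) hu tendsto_const_nhds
      ENNReal.zero_ne_top hh.2.ne (zero_mul _)
  have hg_diff : Tendsto (fun i => eLpNorm (g * (v i - h)) r μ) l (𝓝 0) :=
    tendsto_eLpNorm_mul_of_mul_eq_zero (fun _ => hg.1) hvm' tendsto_const_nhds hv hg.2.ne
      ENNReal.zero_ne_top (mul_zero _)
  have hum_diff_diff i := (hum' i).mul (hvm' i)
  have hum_diff_h i := (hum' i).mul hh.1
  have hsum := tendsto_eLpNorm_add_of_tendsto_zero
    (fun i => (hum_diff_diff i).add (hum_diff_h i)) (fun i => hg.1.mul (hvm' i))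
    (tendsto_eLpNorm_add_of_tendsto_zero hum_diff_diff hum_diff_h hdiff_diff hdiff_h) hg_diff
  refine hsum.congr fun i => ?_
  congr 1
  noncomm_ring

end Lp

section Moments

variable {Ω R ι : Type*} [MeasurableSpace Ω] [NormedRing R] {μ : Measure Ω} {l : Filter ι}

variable (μ) in
/-- Convergence in `L^p` for all `p < ∞` simultaneously, among random variables all of whose
moments are finite. -/
structure TendstoInMoments (u : ι → Ω → R) (l : Filter ι) (g : Ω → R) : Prop where
  memLp : ∀ i, ∀ p ≠ ∞, MemLp (u i) p μ
  memLp_lim : ∀ p ≠ ∞, MemLp g p μ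
  tendsto : ∀ p ≠ ∞, Tendsto (fun i => eLpNorm (u i - g) p μ) l (𝓝 0)

namespace TendstoInMoments

variable {u v : ι → Ω → R} {g h : Ω → R}

theorem const (hg : ∀ p ≠ ∞, MemLp g p μ) : TendstoInMoments μ (fun _ : ι => g) l g where
  memLp _ := hg
  memLp_lim := hg
  tendsto p _ := by simp only [sub_self, eLpNorm_zero, tendsto_const_nhds]

theorem add (hu : TendstoInMoments μ u l g) (hv : TendstoInMoments μ v l h) :
    TendstoInMoments μ (fun i => u i + v i) l (g + h) where
  memLp i p hp := (hu.memLp i p hp).add (hv.memLp i p hp)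
  memLp_lim p hp := (hu.memLp_lim p hp).add (hv.memLp_lim p hp)
  tendsto p hp := by
    simp only [add_sub_add_comm]
    exact tendsto_eLpNorm_add_of_tendsto_zero
      (fun i => (hu.memLp i p hp).1.sub (hu.memLp_lim p hp).1)
      (fun i => (hv.memLp i p hp).1.sub (hv.memLp_lim p hp).1) (hu.tendsto p hp) (hv.tendsto p hp)

theorem mul (hu : TendstoInMoments μ u l g) (hv : TendstoInMoments μ v l h) :
    TendstoInMoments μ (fun i => u i * v i) l (g * h) := by
  have h2 {p : ℝ≥0∞} (hp : p ≠ ∞) : 2 * p ≠ ∞ := ENNReal.mul_ne_top ENNReal.ofNat_ne_top hp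
  have := holderTriple_two_mul
  exact
    { memLp := fun i p hp => (hv.memLp i _ (h2 hp)).mul (hu.memLp i _ (h2 hp))
      memLp_lim := fun p hp => (hv.memLp_lim _ (h2 hp)).mul (hu.memLp_lim _ (h2 hp))
      tendsto := fun p hp => tendsto_eLpNorm_mul_sub
        (fun i => (hu.memLp i _ (h2 hp)).1) (fun i => (hv.memLp i _ (h2 hp)).1)
        (hu.memLp_lim _ (h2 hp)) (hv.memLp_lim _ (h2 hp))
        (hu.tendsto _ (h2 hp)) (hv.tendsto _ (h2 hp)) }

end TendstoInMoments

/-- The subalgebra of all limits, in `L^p` for every `p < ∞` simultaneously, of sequences in `A`.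
Its elements are honest functions rather than classes modulo almost everywhere equality. -/
def momentClosure {𝕜 : Type*} [NormedField 𝕜] [NormedAlgebra 𝕜 R] (μ : Measure Ω)
    [IsFiniteMeasure μ] (A : Subalgebra 𝕜 (Ω → R)) : Subalgebra 𝕜 (Ω → R) where
  carrier := {g | ∃ u : ℕ → Ω → R, (∀ n, u n ∈ A) ∧ TendstoInMoments μ u atTop g}
  algebraMap_mem' c := ⟨fun _ => algebraMap 𝕜 _ c, fun _ => algebraMap_mem A c,
    .const fun _ _ => memLp_const (algebraMap 𝕜 R c)⟩
  add_mem' := fun ⟨_, hu, hug⟩ ⟨_, hv, hvh⟩ => ⟨_, fun n => add_mem (hu n) (hv n), hug.add hvh⟩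
  mul_mem' := fun ⟨_, hu, hug⟩ ⟨_, hv, hvh⟩ => ⟨_, fun n => mul_mem (hu n) (hv n), hug.mul hvh⟩

theorem mem_momentClosure {𝕜 : Type*} [NormedField 𝕜] [NormedAlgebra 𝕜 R] [IsFiniteMeasure μ]
    {A : Subalgebra 𝕜 (Ω → R)} {g : Ω → R} :
    g ∈ momentClosure μ A ↔
      ∃ u : ℕ → Ω → R, (∀ n, u n ∈ A) ∧ TendstoInMoments μ u atTop g :=
  Iff.rfl

end Moments

namespace WienerL1Continuous

variable {Ω ι : Type*} [MeasurableSpace Ω] {μ : Measure Ω} {V : Submodule ℝ (Ω → ℝ)}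
  {ℓ : V →ₗ[ℝ] ℝ}

theorem tendsto (hℓ : WienerL1Continuous μ ℓ) {l : Filter ι} {u : ι → V} {g : V}
    (hu : Tendsto (fun i => eLpNorm (u i - g : Ω → ℝ) 1 μ) l (𝓝 0)) :
    Tendsto (fun i => ℓ (u i)) l (𝓝 (ℓ g)) := by
  obtain ⟨C, hC⟩ := hℓ
  have hint_le i : ∫ ω, |(u i - g : Ω → ℝ) ω| ∂μ ≤ (eLpNorm (u i - g : Ω → ℝ) 1 μ).toReal := by
    rw [eLpNorm_one_eq_lintegral_enorm]
    have hnorm := norm_integral_le_lintegral_norm (μ := μ) fun ω => |(u i - g : Ω → ℝ) ω|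
    simp only [Real.norm_eq_abs, abs_abs, ← Real.enorm_eq_ofReal_abs] at hnorm
    exact (le_abs_self _).trans hnorm
  have hint : Tendsto (fun i => ∫ ω, |(u i - g : Ω → ℝ) ω| ∂μ) l (𝓝 0) :=
    squeeze_zero (fun _ => integral_nonneg fun _ => abs_nonneg _) hint_le
      ((ENNReal.tendsto_toReal ENNReal.zero_ne_top).comp hu)
  refine tendsto_iff_dist_tendsto_zero.2 ?_
  refine squeeze_zero (fun _ => dist_nonneg) (fun i => ?_)
    (by simpa only [mul_zero] using hint.const_mul C)
  rw [Real.dist_eq, ← map_sub]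
  exact hC (u i - g)

theorem sq_mul_nonneg_of_mem_momentClosure [IsFiniteMeasure μ] (hℓ : WienerL1Continuous μ ℓ)
    {A : Subalgebra ℝ (Ω → ℝ)} {f : Ω → ℝ} (hf : ∀ p ≠ ∞, MemLp f p μ)
    (hAV : ∀ u ∈ A, u ^ 2 * f ∈ V) (hpos : ∀ u (hu : u ∈ A), 0 ≤ ℓ ⟨u ^ 2 * f, hAV u hu⟩)
    {g : Ω → ℝ} (hg : g ∈ momentClosure μ A) (hgV : g ^ 2 * f ∈ V) : 0 ≤ ℓ ⟨g ^ 2 * f, hgV⟩ := by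
  obtain ⟨u, hu, hug⟩ := mem_momentClosure.1 hg
  have hlim := ((hug.mul hug).mul (.const hf)).tendsto 1 ENNReal.one_ne_top
  simp only [← pow_two] at hlim
  let F n : V := ⟨u n ^ 2 * f, hAV _ (hu n)⟩
  exact ge_of_tendsto' (hℓ.tendsto (u := F) (g := ⟨_, hgV⟩) hlim) fun n => hpos _ (hu n)

end WienerL1Continuous

section Monomials

theorem mem_closure_image_iff_exists_prod_pow {ι M : Type*} [CommMonoid M] {x : ι → M}
    {S : Set ι} {y : M} :
    y ∈ Submonoid.closure (x '' S) ↔ ∃ (m : ℕ) (i : Fin m → ℕ) (s : Fin m → ι),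
      (∀ j, 1 ≤ i j) ∧ (∀ j, s j ∈ S) ∧ y = ∏ j, x (s j) ^ i j := by
  constructor
  · intro hy
    obtain ⟨L, hL, rfl⟩ := Submonoid.exists_list_of_mem_closure hy
    choose s hsS hsL using fun j : Fin L.length => hL L[j] (L.getElem_mem j.2)
    refine ⟨L.length, 1, s, fun _ => le_rfl, hsS, ?_⟩
    simp only [hsL, Pi.one_apply, pow_one, Fin.getElem_fin, Fin.prod_univ_getElem]
  · rintro ⟨m, i, s, -, hs, rfl⟩
    exact prod_mem fun j _ => pow_mem (Submonoid.subset_closure (Set.mem_image_of_mem x (hs j))) _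

variable {Ω : Type*} (b : ℝ → Ω → ℝ)

theorem PiR_eq_closure : PiR b = Submonoid.closure (b '' Set.Ioc 0 1) := by
  ext Y
  simp only [SetLike.mem_coe, mem_closure_image_iff_exists_prod_pow, Finset.prod_fn, Pi.pow_apply]
  rfl

theorem PiQ_eq_closure :
    PiQ b = Submonoid.closure ((fun q : ℚ => b q) '' Set.Ioc 0 1) := by
  ext Y
  simp only [SetLike.mem_coe, mem_closure_image_iff_exists_prod_pow, Finset.prod_fn, Pi.pow_apply]
  rfl

variable {b}

theorem mem_span_PiR_iff {Y : Ω → ℝ} :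
    Y ∈ Submodule.span ℝ (PiR b) ↔ Y ∈ Algebra.adjoin ℝ (b '' Set.Ioc 0 1) := by
  rw [PiR_eq_closure, ← Algebra.adjoin_eq_span, Subalgebra.mem_toSubmodule]

theorem mem_span_PiQ_iff {Y : Ω → ℝ} :
    Y ∈ Submodule.span ℝ (PiQ b) ↔
      Y ∈ Algebra.adjoin ℝ ((fun q : ℚ => b q) '' Set.Ioc 0 1) := by
  rw [PiQ_eq_closure, ← Algebra.adjoin_eq_span, Subalgebra.mem_toSubmodule]

theorem sq_mul_mem_span_PiR {g f : Ω → ℝ} (hg : g ∈ Submodule.span ℝ (PiR b))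
    (hf : f ∈ Submodule.span ℝ (PiR b)) : g ^ 2 * f ∈ Submodule.span ℝ (PiR b) :=
  mem_span_PiR_iff.2 (mul_mem (pow_mem (mem_span_PiR_iff.1 hg) 2) (mem_span_PiR_iff.1 hf))

theorem sq_mul_mem_span_PiQ {g f : Ω → ℝ} (hg : g ∈ Submodule.span ℝ (PiQ b))
    (hf : f ∈ Submodule.span ℝ (PiQ b)) : g ^ 2 * f ∈ Submodule.span ℝ (PiQ b) :=
  mem_span_PiQ_iff.2 (mul_mem (pow_mem (mem_span_PiQ_iff.1 hg) 2) (mem_span_PiQ_iff.1 hf))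

theorem span_PiQ_le_span_PiR : Submodule.span ℝ (PiQ b) ≤ Submodule.span ℝ (PiR b) := by
  refine Submodule.span_mono ?_
  rintro _ ⟨m, i, q, hi, hq, rfl⟩
  have hq' j : (0 : ℝ) < q j ∧ (q j : ℝ) ≤ 1 := by exact_mod_cast hq j
  exact ⟨m, i, fun j => q j, hi, hq', rfl⟩

end Monomials

theorem adjoin_le_momentClosure_of_rat {Ω : Type*} [MeasurableSpace Ω] {W : Measure Ω}
    [IsFiniteMeasure W] {b : ℝ → Ω → ℝ}
    (hmem : ∀ t ∈ Set.Ioc (0 : ℝ) 1, ∀ p ≠ ∞, MemLp (b t) p W)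
    (hcont : ∀ t ∈ Set.Ioc (0 : ℝ) 1, ∀ p ≠ ∞,
      Tendsto (fun s => eLpNorm (b s - b t) p W) (𝓝[Set.Ioc 0 1] t) (𝓝 0)) :
    Algebra.adjoin ℝ (b '' Set.Ioc 0 1) ≤
      momentClosure W (Algebra.adjoin ℝ ((fun q : ℚ => b q) '' Set.Ioc 0 1)) := by
  refine Algebra.adjoin_le ?_
  rintro _ ⟨t, ht, rfl⟩
  obtain ⟨q, -, hq, hqt⟩ :=
    Rat.denseRange_cast.exists_seq_strictMono_tendsto_of_lt Rat.cast_strictMono.monotone ht.1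
  have hqmem n : (q n : ℝ) ∈ Set.Ioc (0 : ℝ) 1 := ⟨(hq n).1, (hq n).2.le.trans ht.2⟩
  have hqt' : Tendsto (fun n => (q n : ℝ)) atTop (𝓝[Set.Ioc 0 1] t) :=
    tendsto_nhdsWithin_iff.2 ⟨hqt, .of_forall hqmem⟩
  exact mem_momentClosure.2 ⟨fun n => b (q n),
    fun n => Algebra.subset_adjoin
      ⟨q n, ⟨Rat.cast_pos.1 (hqmem n).1, by exact_mod_cast (hqmem n).2⟩, rfl⟩,
    { memLp := fun n => hmem _ (hqmem n)
      memLp_lim := hmem t ht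
      tendsto := fun p hp => (hcont t ht p hp).comp hqt' }⟩

theorem positivity_extends_to_real_times_general
    {Ω : Type*} [MeasurableSpace Ω] {W : Measure Ω} [IsFiniteMeasure W] {b : ℝ → Ω → ℝ}
    (hmem : ∀ t ∈ Set.Ioc (0 : ℝ) 1, ∀ p ≠ ∞, MemLp (b t) p W)
    (hcont : ∀ t ∈ Set.Ioc (0 : ℝ) 1, ∀ p ≠ ∞,
      Tendsto (fun s => eLpNorm (b s - b t) p W) (𝓝[Set.Ioc 0 1] t) (𝓝 0))
    {ℓ : Submodule.span ℝ (PiR b) →ₗ[ℝ] ℝ} (hℓ : WienerL1Continuous W ℓ)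
    {f : Ω → ℝ} (hf : f ∈ Submodule.span ℝ (PiR b))
    (hpos : ∀ g ∈ Submodule.span ℝ (PiQ b),
      ∀ hm : g ^ 2 * f ∈ Submodule.span ℝ (PiR b), 0 ≤ ℓ ⟨g ^ 2 * f, hm⟩) :
    ∀ g ∈ Submodule.span ℝ (PiR b),
      ∀ hm : g ^ 2 * f ∈ Submodule.span ℝ (PiR b), 0 ≤ ℓ ⟨g ^ 2 * f, hm⟩ := by
  intro g hg hm
  have hclosure : ∀ h ∈ Submodule.span ℝ (PiR b),
      h ∈ momentClosure W (Algebra.adjoin ℝ ((fun q : ℚ => b q) '' Set.Ioc 0 1)) :=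
    fun h hh => adjoin_le_momentClosure_of_rat hmem hcont (mem_span_PiR_iff.1 hh)
  obtain ⟨_, -, hlim⟩ := mem_momentClosure.1 (hclosure f hf)
  exact hℓ.sq_mul_nonneg_of_mem_momentClosure hlim.memLp_lim
    (fun u hu => sq_mul_mem_span_PiR (span_PiQ_le_span_PiR (mem_span_PiQ_iff.2 hu)) hf)
    (fun u hu => hpos u (mem_span_PiQ_iff.2 hu) _) (hclosure g hg) hm

theorem eLpNorm_id_gaussianReal_zero (v : ℝ≥0) (p : ℝ≥0∞) :
    eLpNorm id p (gaussianReal 0 v) = ENNReal.ofReal √v * eLpNorm id p (gaussianReal 0 1) := by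
  have hscale : gaussianReal 0 v = (gaussianReal 0 1).map (√v * ·) := by
    rw [gaussianReal_map_const_mul, mul_zero, mul_one]
    congr 1
    exact NNReal.eq (Real.sq_sqrt v.coe_nonneg).symm
  have hcomp : (id ∘ fun x : ℝ => √v * x) = √v • id := rfl
  rw [hscale, eLpNorm_map_measure aestronglyMeasurable_id (measurable_const_mul _).aemeasurable,
    hcomp, eLpNorm_const_smul, Real.enorm_of_nonneg (Real.sqrt_nonneg _)]

namespace IsBrownianMotion

variable {Ω : Type*} [MeasurableSpace Ω] {W : Measure Ω} {b : ℝ → Ω → ℝ}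

theorem eLpNorm_sub_of_le (hb : IsBrownianMotion W b) {s t : ℝ} (hs : 0 ≤ s) (hst : s ≤ t)
    (ht : t ≤ 1) (p : ℝ≥0∞) :
    eLpNorm (b t - b s) p W = ENNReal.ofReal √(t - s) * eLpNorm id p (gaussianReal 0 1) := by
  obtain ⟨hmeas, -, -, hgauss, -⟩ := hb
  have hmap : eLpNorm (b t - b s) p W = eLpNorm id p (W.map fun ω => b t ω - b s ω) := by
    have hincr : Measurable fun ω => b t ω - b s ω := (hmeas t).sub (hmeas s)
    rw [eLpNorm_map_measure aestronglyMeasurable_id hincr.aemeasurable]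
    rfl
  rw [hmap, hgauss s t hs hst ht, eLpNorm_id_gaussianReal_zero,
    Real.coe_toNNReal _ (sub_nonneg.2 hst)]

theorem eLpNorm_sub (hb : IsBrownianMotion W b) {s t : ℝ} (hs : s ∈ Set.Icc (0 : ℝ) 1)
    (ht : t ∈ Set.Icc (0 : ℝ) 1) (p : ℝ≥0∞) :
    eLpNorm (b t - b s) p W = ENNReal.ofReal √|t - s| * eLpNorm id p (gaussianReal 0 1) := by
  rcases le_total s t with hst | hts
  · rw [abs_of_nonneg (sub_nonneg.2 hst), hb.eLpNorm_sub_of_le hs.1 hst ht.2]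
  · rw [eLpNorm_sub_comm, abs_sub_comm, abs_of_nonneg (sub_nonneg.2 hts),
      hb.eLpNorm_sub_of_le ht.1 hts hs.2]

theorem memLp (hb : IsBrownianMotion W b) {t : ℝ} (ht : t ∈ Set.Icc (0 : ℝ) 1) {p : ℝ≥0∞}
    (hp : p ≠ ∞) : MemLp (b t) p W := by
  have hb0 : b 0 = 0 := funext hb.2.2.1
  have hnorm := hb.eLpNorm_sub (Set.left_mem_Icc.2 zero_le_one) ht p
  rw [hb0, sub_zero] at hnorm
  exact ⟨(hb.1 t).aestronglyMeasurable,
    hnorm ▸ ENNReal.mul_lt_top ENNReal.ofReal_lt_top (memLp_id_gaussianReal' p hp).2⟩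

theorem tendsto_eLpNorm_sub (hb : IsBrownianMotion W b) {t : ℝ} (ht : t ∈ Set.Icc (0 : ℝ) 1)
    {p : ℝ≥0∞} (hp : p ≠ ∞) :
    Tendsto (fun s => eLpNorm (b s - b t) p W) (𝓝[Set.Icc 0 1] t) (𝓝 0) := by
  have hsqrt : Tendsto (fun s => ENNReal.ofReal √|s - t|) (𝓝 t) (𝓝 0) := by
    have hcont : Continuous fun s => ENNReal.ofReal √|s - t| :=
      ENNReal.continuous_ofReal.comp (by fun_prop)
    simpa using hcont.tendsto t
  have hprod := ENNReal.Tendsto.mul_const hsqrt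
    (.inr (memLp_id_gaussianReal' (μ := 0) (v := 1) p hp).2.ne)
  rw [zero_mul] at hprod
  refine (hprod.mono_left nhdsWithin_le_nhds).congr' ?_
  filter_upwards [self_mem_nhdsWithin] with s hs using (hb.eLpNorm_sub ht hs p).symm

end IsBrownianMotion

theorem positivity_extends_to_real_times
    {Ω : Type*} [MeasurableSpace Ω] (W : Measure Ω) [IsProbabilityMeasure W]
    (b : ℝ → Ω → ℝ) (hb : IsBrownianMotion W b)
    (ℓ : Submodule.span ℝ (PiQ b) →ₗ[ℝ] ℝ) (hℓ : WienerL1Continuous W ℓ)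
    -- ℓbar is the (unique) Wiener-L¹-continuous extension of ℓ to ⟨Π_ℝ⟩
    (ℓbar : Submodule.span ℝ (PiR b) →ₗ[ℝ] ℝ) (hℓbar : WienerL1Continuous W ℓbar)
    (hext : ∀ (F : Ω → ℝ) (hFQ : F ∈ Submodule.span ℝ (PiQ b))
      (hFR : F ∈ Submodule.span ℝ (PiR b)), ℓbar ⟨F, hFR⟩ = ℓ ⟨F, hFQ⟩)
    -- f(b) ∈ ⟨Π_ℚ⟩ with ℓ(g(b)² f(b)) ≥ 0 for all g(b) ∈ ⟨Π_ℚ⟩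
    (f : Ω → ℝ) (hf : f ∈ Submodule.span ℝ (PiQ b))
    (hpos : ∀ (g : Ω → ℝ), g ∈ Submodule.span ℝ (PiQ b) →
      ∀ hm : g ^ 2 * f ∈ Submodule.span ℝ (PiQ b), 0 ≤ ℓ ⟨g ^ 2 * f, hm⟩) :
    -- then ℓbar(g(b)² f(b)) ≥ 0 for all g(b) ∈ ⟨Π_ℝ⟩
    ∀ (g : Ω → ℝ), g ∈ Submodule.span ℝ (PiR b) →
      ∀ hm : g ^ 2 * f ∈ Submodule.span ℝ (PiR b), 0 ≤ ℓbar ⟨g ^ 2 * f, hm⟩ :=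
  positivity_extends_to_real_times_general
    (fun _ ht _ hp => hb.memLp (Set.Ioc_subset_Icc_self ht) hp)
    (fun _ ht _ hp => (hb.tendsto_eLpNorm_sub (Set.Ioc_subset_Icc_self ht) hp).mono_left
      (nhdsWithin_mono _ Set.Ioc_subset_Icc_self))
    hℓbar (span_PiQ_le_span_PiR hf)
    fun g hg _ => hext _ (sq_mul_mem_span_PiQ hg hf) _ ▸ hpos g hg _
end

section
/- Let d ∈ ℕ, let μ be a Borel probability measure on ℝ^d, let Π be a finite set of polynomials in ℝ[X_1, …, X_d] each of which (as a function on ℝ^d) is μ-integrable, and let ε > 0. Then there exists K̄ ∈ ℕ such that: (i) for every real K ≥ K̄ and every p ∈ Π, | ∫_{{y ∈ ℝ^d : max_i |y_i| ≤ K}} p dμ − ∫_{ℝ^d} p dμ | < ε; and (ii) there exists a natural number H ≥ K̄ such that for every lattice point a ∈ [−K̄, K̄)^d ∩ (1/H!)ℤ^d and every p ∈ Π, | ∫_{∏_{i=1}^d [a_i, a_i + 1/H!)} p dμ − p(a) · μ( ∏_{i=1}^d [a_i, a_i + 1/H!) ) | < ε. -/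
open MeasureTheory Filter

open scoped Topology

/-!
Dominated convergence over growing balls gives the truncation radius. With the radius fixed, the
lattice points lie in a compact ball, a neighbourhood of which has finite measure. By Heine–Cantor
the oscillation of the integrands over small balls centred in it is uniformly small, and the
error on a cell is at most this oscillation times the measure of the cell.
-/

theorem norm_setIntegral_sub_measureReal_smul_le {α E : Type*} [MeasurableSpace α]
    [NormedAddCommGroup E] [NormedSpace ℝ E] [CompleteSpace E] {μ : Measure α} {f : α → E}
    {S : Set α} {c : E} {η : ℝ} (hf : IntegrableOn f S μ) (hS : μ S < ⊤)
    (hfc : ∀ y ∈ S, ‖f y - c‖ ≤ η) :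
    ‖(∫ y in S, f y ∂μ) - μ.real S • c‖ ≤ η * μ.real S := by
  rw [← setIntegral_const, ← integral_sub hf (integrableOn_const hS.ne)]
  exact norm_setIntegral_le_of_norm_le_const hS hfc

section MetricSpace

variable {X : Type*} [PseudoMetricSpace X]

theorem eventually_forall_dist_le_of_continuousAt {Y : Type*} [PseudoMetricSpace Y] {C : Set X}
    (hC : IsCompact C) {f : X → Y} (hf : ∀ a ∈ C, ContinuousAt f a) {η : ℝ}
    (hη : 0 < η) :
    ∀ᶠ δ in 𝓝 (0 : ℝ), ∀ a ∈ C, ∀ y ∈ Metric.closedBall a δ, dist (f y) (f a) ≤ η := by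
  obtain ⟨δ₀, hδ₀, hunif⟩ := Metric.mem_uniformity_dist.1 <|
    hC.uniformContinuousAt_of_continuousAt f hf (Metric.dist_mem_uniformity hη)
  filter_upwards [gt_mem_nhds hδ₀] with δ hδ a ha y hy
  have hay : dist a y < δ₀ := (Metric.mem_closedBall'.1 hy).trans_lt hδ
  rw [dist_comm]
  exact (hunif hay ha).le

theorem eventually_forall_closedBall_subset {C U : Set X} (hC : IsCompact C) (hU : IsOpen U)
    (hCU : C ⊆ U) : ∀ᶠ δ in 𝓝 (0 : ℝ), ∀ a ∈ C, Metric.closedBall a δ ⊆ U := by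
  obtain ⟨δ₀, hδ₀, hthick⟩ := hC.exists_cthickening_subset_open hU hCU
  filter_upwards [ge_mem_nhds hδ₀] with δ hδ a ha
  calc Metric.closedBall a δ
      ⊆ Metric.closedBall a δ₀ := Metric.closedBall_subset_closedBall hδ
    _ ⊆ Metric.cthickening δ₀ C := Metric.closedBall_subset_cthickening ha δ₀
    _ ⊆ U := hthick

variable {E : Type*} [NormedAddCommGroup E] [NormedSpace ℝ E] [MeasurableSpace X] {μ : Measure X}

theorem eventually_norm_setIntegral_closedBall_sub_integral_lt [OpensMeasurableSpace X]
    {f : X → E} (hf : Integrable f μ) (x : X) {ε : ℝ} (hε : 0 < ε) :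
    ∀ᶠ r in atTop, ‖(∫ y in Metric.closedBall x r, f y ∂μ) - ∫ y, f y ∂μ‖ < ε := by
  have hcover : AECover μ atTop (fun r => Metric.closedBall x r) := aecover_closedBall tendsto_id
  have hlim := hcover.integral_tendsto_of_countably_generated hf
  simpa only [dist_eq_norm] using Metric.tendsto_nhds.1 hlim ε hε

theorem eventually_forall_norm_setIntegral_sub_measureReal_smul_lt [CompleteSpace E]
    [IsLocallyFiniteMeasure μ] {C : Set X} (hC : IsCompact C) {f : X → E}
    (hcont : ∀ a ∈ C, ContinuousAt f a) (hint : LocallyIntegrable f μ) {ε : ℝ} (hε : 0 < ε) :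
    ∀ᶠ δ in 𝓝 (0 : ℝ), ∀ a ∈ C, ∀ S ⊆ Metric.closedBall a δ,
      ‖(∫ y in S, f y ∂μ) - μ.real S • f a‖ < ε := by
  obtain ⟨U, hCU, hUopen, hUfin⟩ := hC.exists_open_superset_measure_lt_top μ
  obtain ⟨V, hVopen, hCV, hfV⟩ := hint.integrableOn_nhds_isCompact hC
  obtain ⟨η, hη, hηε⟩ := exists_pos_mul_lt hε (μ.real U)
  filter_upwards [eventually_forall_dist_le_of_continuousAt hC hcont hη,
    eventually_forall_closedBall_subset hC (hUopen.inter hVopen) (Set.subset_inter hCU hCV)]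
    with δ hosc hball a ha S hS
  obtain ⟨hSU, hSV⟩ := Set.subset_inter_iff.1 (hS.trans (hball a ha))
  calc ‖(∫ y in S, f y ∂μ) - μ.real S • f a‖
      ≤ η * μ.real S := norm_setIntegral_sub_measureReal_smul_le (hfV.mono_set hSV)
        ((measure_mono hSU).trans_lt hUfin)
        fun y hy => (dist_eq_norm (f y) (f a)).ge.trans (hosc a ha y (hS hy))
    _ ≤ η * μ.real U := by gcongr; exact hUfin.ne
    _ = μ.real U * η := mul_comm _ _
    _ < ε := hηε

end MetricSpace

section Cubes

variable {ι : Type*} [Fintype ι]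

theorem mem_closedBall_zero_iff_forall_abs_le {K : ℝ} (hK : 0 ≤ K) {y : ι → ℝ} :
    y ∈ Metric.closedBall 0 K ↔ ∀ i, |y i| ≤ K := by
  simp only [mem_closedBall_zero_iff, pi_norm_le_iff_of_nonneg hK, Real.norm_eq_abs]

theorem setOf_forall_mem_Ico_subset_closedBall (a : ι → ℝ) {δ : ℝ} (hδ : 0 ≤ δ) :
    {y : ι → ℝ | ∀ i, y i ∈ Set.Ico (a i) (a i + δ)} ⊆ Metric.closedBall a δ := by
  refine fun y hy => (dist_pi_le_iff hδ).2 fun i => ?_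
  obtain ⟨hlower, hupper⟩ := hy i
  rw [Real.dist_eq, abs_of_nonneg (sub_nonneg.2 hlower)]
  linarith

end Cubes

theorem tendsto_one_div_factorial_nhdsGT_zero :
    Tendsto (fun H : ℕ => 1 / (H.factorial : ℝ)) atTop (𝓝[>] 0) := by
  simp only [one_div]
  exact tendsto_inv_atTop_nhdsGT_zero.comp
    (tendsto_natCast_atTop_atTop.comp factorial_tendsto_atTop)

theorem truncation_and_grid_approximation_general {ι κ E : Type*} [Finite ι]
    [NormedAddCommGroup E] [NormedSpace ℝ E] [CompleteSpace E]
    {μ : Measure (ι → ℝ)} [IsLocallyFiniteMeasure μ] {s : Finset κ} {f : κ → (ι → ℝ) → E}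
    (hcont : ∀ k ∈ s, Continuous (f k)) (hint : ∀ k ∈ s, Integrable (f k) μ)
    {ε : ℝ} (hε : 0 < ε) :
    ∃ Kbar : ℕ,
      (∀ K : ℝ, (Kbar : ℝ) ≤ K → ∀ k ∈ s,
        ‖(∫ y in {y | ∀ i, |y i| ≤ K}, f k y ∂μ) - ∫ y, f k y ∂μ‖ < ε) ∧
      ∀ᶠ δ in 𝓝[>] (0 : ℝ), ∀ a : ι → ℝ, (∀ i, |a i| ≤ Kbar) → ∀ k ∈ s,
        ‖(∫ y in {y | ∀ i, y i ∈ Set.Ico (a i) (a i + δ)}, f k y ∂μ) -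
          μ.real {y | ∀ i, y i ∈ Set.Ico (a i) (a i + δ)} • f k a‖ < ε := by
  have := Fintype.ofFinite ι
  have htrunc : ∀ᶠ K in atTop, ∀ k ∈ s,
      ‖(∫ y in Metric.closedBall 0 K, f k y ∂μ) - ∫ y, f k y ∂μ‖ < ε :=
    (eventually_all_finset s).2 fun k hk =>
      eventually_norm_setIntegral_closedBall_sub_integral_lt (hint k hk) 0 hε
  obtain ⟨K₀, hK₀⟩ := eventually_atTop.1 htrunc
  obtain ⟨Kbar, hKbar⟩ := exists_nat_ge K₀
  have hcell : ∀ᶠ δ in 𝓝 (0 : ℝ), ∀ k ∈ s, ∀ a ∈ Metric.closedBall (0 : ι → ℝ) Kbar,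
      ∀ S ⊆ Metric.closedBall a δ, ‖(∫ y in S, f k y ∂μ) - μ.real S • f k a‖ < ε :=
    (eventually_all_finset s).2 fun k hk =>
      eventually_forall_norm_setIntegral_sub_measureReal_smul_lt (isCompact_closedBall 0 _)
        (fun _ _ => (hcont k hk).continuousAt) (hint k hk).locallyIntegrable hε
  refine ⟨Kbar, fun K hK k hk => ?_, ?_⟩
  · simp only [← mem_closedBall_zero_iff_forall_abs_le (Kbar.cast_nonneg.trans hK)]
    exact hK₀ K (hKbar.trans hK) k hk
  · filter_upwards [nhdsWithin_le_nhds hcell, self_mem_nhdsWithin] with δ hδ hδpos a ha k hk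
    exact hδ k hk a ((mem_closedBall_zero_iff_forall_abs_le Kbar.cast_nonneg).2 ha) _
      (setOf_forall_mem_Ico_subset_closedBall a hδpos.le)

theorem truncation_and_grid_approximation
    (d : ℕ) (μ : Measure (Fin d → ℝ)) [IsProbabilityMeasure μ]
    (Ps : Finset (MvPolynomial (Fin d) ℝ))
    (hint : ∀ p ∈ Ps, Integrable (fun y => MvPolynomial.eval y p) μ)
    (ε : ℝ) (hε : 0 < ε) :
    ∃ Kbar : ℕ,
      -- (i) truncation: for every K ≥ K̄ and every p ∈ Π
      (∀ K : ℝ, (Kbar : ℝ) ≤ K → ∀ p ∈ Ps,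
        |(∫ y in {y : Fin d → ℝ | ∀ i', |y i'| ≤ K}, MvPolynomial.eval y p ∂μ) -
          ∫ y, MvPolynomial.eval y p ∂μ| < ε) ∧
      -- (ii) grid approximation: there is H ≥ K̄ such that on every cell of the lattice
      -- [−K̄, K̄)^d ∩ (1/H!)ℤ^d the integral of p is within ε of p(a)·μ(cell)
      (∃ H : ℕ, Kbar ≤ H ∧
        ∀ a : Fin d → ℝ,
          (∀ i', a i' ∈ Set.Ico (-(Kbar : ℝ)) (Kbar : ℝ) ∧
            ∃ n : ℤ, a i' = (n : ℝ) / (H.factorial : ℝ)) →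
          ∀ p ∈ Ps,
            |(∫ y in {y : Fin d → ℝ | ∀ i',
                y i' ∈ Set.Ico (a i') (a i' + 1 / (H.factorial : ℝ))},
                MvPolynomial.eval y p ∂μ) -
              MvPolynomial.eval a p *
                (μ {y : Fin d → ℝ | ∀ i',
                  y i' ∈ Set.Ico (a i') (a i' + 1 / (H.factorial : ℝ))}).toReal| < ε) := by
  obtain ⟨Kbar, htrunc, hgrid⟩ := truncation_and_grid_approximation_general
    (fun p _ => MvPolynomial.continuous_eval p) hint hε
  obtain ⟨H, hH, hKbarH⟩ := ((tendsto_one_div_factorial_nhdsGT_zero.eventually hgrid).and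
    (eventually_ge_atTop Kbar)).exists
  refine ⟨Kbar, htrunc, H, hKbarH, fun a ha p hp => ?_⟩
  rw [mul_comm]
  exact hH a (fun i => abs_le.2 ⟨(ha i).1.1, (ha i).1.2.le⟩) p hp
end
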